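/- Let k be a field, c ≥ 1 an integer, and A the exterior algebra k⟨x_1, …, x_c⟩/(x_i^2 for all i, x_i x_j + x_j x_i for all i ≠ j), equivalently the exterior algebra on a c-dimensional k-vector space. Then, given two finitely generated left A-modules M and N, either Ext_A^n(M, N) = 0 for all n > 0, or there exists a non-negative integer m_0 such that Ext_A^n(M, N) ≠ 0 for all even integers n ≥ m_0, or Ext_A^n(M, N) ≠ 0 for all odd integers n ≥ m_0. -/

import Mathlib

open CategoryTheory

/-!
Let `x₁, …, x_c` be the generators of `A`. On `k[X] ⊗ Hom_k(M, N)` consider the two differentials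
`f ↦ ∑ Xᵢ (xᵢ f - ε f xᵢ)`, one for each sign `ε`. They compose to zero in either order, and their
homology vanishes in positive degrees when `M` is projective; hence, by dimension shifting,
`Ext_A^n(M, N)` is for `n > 0` the homology in degree `n` at the differential of sign `(-1)^n`, each
shift changing the sign.

For a fixed sign the cycles form a Noetherian `k[X]`-module, so they are generated in bounded
degrees: a single vanishing of the homology in a large degree propagates to all later degrees, of
both parities. If `Ext` vanishes in a large even and in a large odd degree, both homologies
therefore vanish in all large degrees. Induction on the number of variables, by reduction modulo
one variable `Xⱼ` and division by it, brings this vanishing down to all positive degrees.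
-/

namespace ExteriorExt

open Finset Set

section Series

variable {ι k H : Type*} [CommRing k] [AddCommGroup H] [Module k H]

/-- Formal power series in the variables `ι` with coefficients in the module `H`, as the family of
their coefficients. -/
abbrev Series (ι H : Type*) : Type _ := (ι →₀ ℕ) → H

/-- The exponents of the monomials of degree `n` in the variables of `J`. Series are compared in one
degree, and modulo the variables outside `J`, by `Set.EqOn` on this set. -/
def monomials (J : Finset ι) (n : ℕ) : Set (ι →₀ ℕ) :=
  {s | s.support ⊆ J ∧ s.degree = n}

lemma monomials_subset_insert [DecidableEq ι] (j : ι) (J : Finset ι) (n : ℕ) :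
    monomials J n ⊆ monomials (insert j J) n :=
  fun _ hs ↦ ⟨hs.1.trans (Finset.subset_insert j J), hs.2⟩

lemma monomials_empty_succ (n : ℕ) : monomials (∅ : Finset ι) (n + 1) = ∅ := by
  refine Set.eq_empty_of_forall_notMem fun s hs ↦ ?_
  have hs0 : s = 0 := by simpa [monomials] using hs.1
  simpa [hs0] using hs.2

lemma add_single_mem_monomials {J : Finset ι} {n : ℕ} {s : ι →₀ ℕ} {j : ι} :
    s + Finsupp.single j 1 ∈ monomials J (n + 1) ↔ j ∈ J ∧ s ∈ monomials J n := by
  classical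
  have hsupp : (s + Finsupp.single j 1).support = insert j s.support := by
    ext i
    by_cases hij : i = j <;> simp [hij, eq_comm]
  simp [monomials, hsupp, Finset.insert_subset_iff, map_add, and_assoc]

lemma apply_eq_zero_of_mem_monomials {J : Finset ι} {n : ℕ} {s : ι →₀ ℕ} {j : ι} (hj : j ∉ J)
    (hs : s ∈ monomials J n) : s j = 0 :=
  Finsupp.notMem_support_iff.1 fun h ↦ hj (hs.1 h)

lemma mem_monomials_of_insert [DecidableEq ι] {J : Finset ι} {n : ℕ} {s : ι →₀ ℕ} {j : ι}
    (hs : s ∈ monomials (insert j J) n) (hj : s j = 0) : s ∈ monomials J n :=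
  ⟨(Finset.subset_insert_iff_of_notMem (by simpa using hj)).1 hs.1, hs.2⟩

lemma apply_eq_zero_or_exists_eq_add_single (s : ι →₀ ℕ) (j : ι) :
    s j = 0 ∨ ∃ t, s = t + Finsupp.single j 1 :=
  (eq_or_ne (s j) 0).imp_right fun h ↦ ⟨_, (Finsupp.sub_add_single_one_cancel h).symm⟩

variable (k) in
/-- Multiplication by the variable `j`. -/
noncomputable def mulX (j : ι) : Series ι H →ₗ[k] Series ι H where
  toFun F s := open Classical in if s j = 0 then 0 else F (s - Finsupp.single j 1)
  map_add' F G := by ext s; by_cases h : s j = 0 <;> simp [h]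
  map_smul' a F := by ext s; by_cases h : s j = 0 <;> simp [h]

lemma mulX_apply_of_eq_zero {j : ι} {s : ι →₀ ℕ} (hs : s j = 0) (F : Series ι H) :
    mulX k j F s = 0 := if_pos hs

@[simp]
lemma mulX_apply_add_single (j : ι) (F : Series ι H) (s : ι →₀ ℕ) :
    mulX k j F (s + Finsupp.single j 1) = F s := by
  simp [mulX]

lemma mulX_comm (i j : ι) (F : Series ι H) :
    mulX k i (mulX k j F) = mulX k j (mulX k i F) := by
  rcases eq_or_ne i j with rfl | hij
  · rfl
  ext s
  by_cases hi : s i = 0 <;> by_cases hj : s j = 0 <;>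
    simp [mulX, hi, hj, hij, hij.symm, tsub_right_comm]

lemma eqOn_compLeft {H' : Type*} [AddCommGroup H'] [Module k H'] (α : H →ₗ[k] H')
    {S : Set (ι →₀ ℕ)} {F G : Series ι H} (h : EqOn F G S) :
    EqOn (α.compLeft _ F) (α.compLeft _ G) S :=
  fun _ hs ↦ congrArg α (h hs)

lemma mulX_compLeft {H' : Type*} [AddCommGroup H'] [Module k H'] (α : H →ₗ[k] H') (j : ι)
    (F : Series ι H) : mulX k j (α.compLeft _ F) = α.compLeft _ (mulX k j F) := by
  ext s
  by_cases hs : s j = 0 <;> simp [mulX, hs]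

lemma eqOn_mulX {J : Finset ι} {n : ℕ} {F G : Series ι H} (h : EqOn F G (monomials J n)) (j : ι) :
    EqOn (mulX k j F) (mulX k j G) (monomials J (n + 1)) := by
  intro s hs
  obtain hj | ⟨t, rfl⟩ := apply_eq_zero_or_exists_eq_add_single s j
  · simp only [mulX_apply_of_eq_zero hj]
  · simpa only [mulX_apply_add_single] using h (add_single_mem_monomials.1 hs).2

lemma eqOn_of_eqOn_mulX {J : Finset ι} {n : ℕ} {F G : Series ι H} {j : ι} (hj : j ∈ J)
    (h : EqOn (mulX k j F) (mulX k j G) (monomials J (n + 1))) : EqOn F G (monomials J n) := by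
  intro s hs
  simpa only [mulX_apply_add_single] using h (add_single_mem_monomials.2 ⟨hj, hs⟩)

lemma eqOn_mulX_zero {J : Finset ι} {j : ι} (hj : j ∉ J) (F : Series ι H) (n : ℕ) :
    EqOn (mulX k j F) 0 (monomials J n) :=
  fun _ hs ↦ mulX_apply_of_eq_zero (apply_eq_zero_of_mem_monomials hj hs) F

lemma exists_eqOn_mulX [DecidableEq ι] {J : Finset ι} {n : ℕ} {F : Series ι H}
    (h : EqOn F 0 (monomials J n)) (j : ι) :
    ∃ u : Series ι H, EqOn F (mulX k j u) (monomials (insert j J) n) := by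
  refine ⟨fun s ↦ F (s + Finsupp.single j 1), fun s hs ↦ ?_⟩
  obtain hj | ⟨t, rfl⟩ := apply_eq_zero_or_exists_eq_add_single s j
  · rw [mulX_apply_of_eq_zero hj]
    exact h (mem_monomials_of_insert hs hj)
  · rw [mulX_apply_add_single]

end Series

section Differential

variable {ι k H : Type*} [Fintype ι] [CommRing k] [AddCommGroup H] [Module k H]

/-- The differential `F ↦ ∑ i, Xᵢ Aᵢ(F)` on formal power series attached to operators `Aᵢ` on the
coefficients. -/
noncomputable def differential (A : ι → Module.End k H) : Series ι H →ₗ[k] Series ι H :=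
  ∑ i, mulX k i ∘ₗ (A i).compLeft (ι →₀ ℕ)

lemma differential_apply (A : ι → Module.End k H) (F : Series ι H) :
    differential A F = ∑ i, mulX k i ((A i).compLeft _ F) := by
  simp [differential]

lemma differential_apply_zero (A : ι → Module.End k H) (F : Series ι H) :
    differential A F 0 = 0 := by
  simp [differential_apply, mulX_apply_of_eq_zero]

lemma eqOn_differential (A : ι → Module.End k H) {J : Finset ι} {n : ℕ} {F G : Series ι H}
    (h : EqOn F G (monomials J n)) :
    EqOn (differential A F) (differential A G) (monomials J (n + 1)) := by
  intro s hs
  simp only [differential_apply, Finset.sum_apply]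
  exact Finset.sum_congr rfl fun i _ ↦ eqOn_mulX (eqOn_compLeft (A i) h) i hs

lemma differential_mulX (A : ι → Module.End k H) (j : ι) (F : Series ι H) :
    differential A (mulX k j F) = mulX k j (differential A F) := by
  simp only [differential_apply, map_sum, ← mulX_compLeft, mulX_comm j]

lemma differential_compLeft {H' : Type*} [AddCommGroup H'] [Module k H'] {A : ι → Module.End k H}
    {A' : ι → Module.End k H'} {α : H →ₗ[k] H'} (h : ∀ i, A' i ∘ₗ α = α ∘ₗ A i)
    (F : Series ι H) : differential A' (α.compLeft _ F) = α.compLeft _ (differential A F) := by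
  have hi (i : ι) : (A' i).compLeft _ (α.compLeft _ F) = α.compLeft _ ((A i).compLeft _ F) :=
    funext fun s ↦ LinearMap.congr_fun (h i) (F s)
  simp only [differential_apply, map_sum, ← mulX_compLeft, hi]

end Differential

section Exactness

variable {ι k H : Type*} [CommRing k] [AddCommGroup H] [Module k H]

/-- Two families of operators, indexed by a sign, such that the differentials of opposite signs
compose to zero: this is the condition `∑ i j, Xᵢ Xⱼ Aᵢ Aⱼ = 0`, coefficient by coefficient. -/
structure IsAnticommuting (A : ℤˣ → ι → Module.End k H) : Prop where
  comp_self (ε : ℤˣ) (i : ι) : A ε i ∘ₗ A (-ε) i = 0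
  comp_add_comp (ε : ℤˣ) (i j : ι) : A ε i ∘ₗ A (-ε) j + A ε j ∘ₗ A (-ε) i = 0

variable [Fintype ι]

lemma IsAnticommuting.differential_differential {A : ℤˣ → ι → Module.End k H}
    (hA : IsAnticommuting A) (ε : ℤˣ) (F : Series ι H) :
    differential (A ε) (differential (A (-ε)) F) = 0 := by
  classical
  have expand : differential (A ε) (differential (A (-ε)) F) = ∑ p : ι × ι,
      mulX k p.1 (mulX k p.2 ((A ε p.1 ∘ₗ A (-ε) p.2).compLeft _ F)) := by
    simp only [differential_apply, map_sum, Fintype.sum_prod_type, ← mulX_compLeft]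
    rw [Finset.sum_comm]
    rfl
  rw [expand]
  refine Finset.sum_involution (fun p _ ↦ p.swap) (fun p _ ↦ ?_) (fun p _ hp hswap ↦ hp ?_)
    (fun p _ ↦ Finset.mem_univ _) (fun p _ ↦ p.swap_swap)
  · rw [Prod.fst_swap, Prod.snd_swap, mulX_comm p.2, ← map_add, ← map_add]
    have h0 : (A ε p.1 ∘ₗ A (-ε) p.2).compLeft (ι →₀ ℕ) F +
        (A ε p.2 ∘ₗ A (-ε) p.1).compLeft (ι →₀ ℕ) F = 0 :=
      funext fun s ↦ LinearMap.congr_fun (hA.comp_add_comp ε p.1 p.2) (F s)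
    simp only [h0, map_zero]
  · have hdiag : p.2 = p.1 := congrArg Prod.fst hswap
    have h0 : (A ε p.1 ∘ₗ A (-ε) p.2).compLeft (ι →₀ ℕ) F = 0 :=
      funext fun s ↦ by rw [hdiag]; exact LinearMap.congr_fun (hA.comp_self ε p.1) (F s)
    simp only [h0, map_zero]

/-- Exactness of the pair of differentials attached to `A`, in degree `n` and modulo the variables
outside `J`: a series whose image under the differential of sign `ε` vanishes in degree `n + 1`
agrees in degree `n` with an image of the differential of sign `-ε`. -/
def IsExactAt (A : ℤˣ → ι → Module.End k H) (J : Finset ι) (ε : ℤˣ) (n : ℕ) : Prop :=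
  ∀ F : Series ι H, EqOn (differential (A ε) F) 0 (monomials J (n + 1)) →
    ∃ G : Series ι H, EqOn F (differential (A (-ε)) G) (monomials J n)

variable {A : ℤˣ → ι → Module.End k H}

lemma isExactAt_empty (ε : ℤˣ) (n : ℕ) : IsExactAt A ∅ ε (n + 1) :=
  fun _ _ ↦ ⟨0, by simp only [monomials_empty_succ, eqOn_empty]⟩

lemma IsAnticommuting.eqOn_differential_sub (hA : IsAnticommuting A) {J : Finset ι} {ε : ℤˣ}
    {n : ℕ} {F : Series ι H} (hF : EqOn (differential (A ε) F) 0 (monomials J n))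
    (G : Series ι H) :
    EqOn (differential (A ε) (F - differential (A (-ε)) G)) 0 (monomials J n) := by
  rw [map_sub, hA.differential_differential, sub_zero]
  exact hF

lemma eqOn_differential_of_mulX {J : Finset ι} {j : ι} (hj : j ∈ J) {ε : ℤˣ} {n : ℕ}
    {F u : Series ι H} (hF : EqOn (differential (A ε) F) 0 (monomials J (n + 2)))
    (hu : EqOn F (mulX k j u) (monomials J (n + 1))) :
    EqOn (differential (A ε) u) 0 (monomials J (n + 1)) := by
  refine eqOn_of_eqOn_mulX (k := k) hj ?_
  rw [← differential_mulX, map_zero]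
  exact (eqOn_differential _ hu).symm.trans hF

lemma IsAnticommuting.exists_eqOn_sub_differential [DecidableEq ι] (hA : IsAnticommuting A)
    {J : Finset ι} {ε : ℤˣ} {n : ℕ} (hJ : IsExactAt A J ε (n + 1)) (j : ι) {F : Series ι H}
    (hF : EqOn (differential (A ε) F) 0 (monomials (insert j J) (n + 2))) :
    ∃ G u : Series ι H, EqOn (F - differential (A (-ε)) G) (mulX k j u)
        (monomials (insert j J) (n + 1)) ∧
      EqOn (differential (A ε) u) 0 (monomials (insert j J) (n + 1)) := by
  obtain ⟨G, hG⟩ := hJ F (hF.mono (monomials_subset_insert j J (n + 2)))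
  obtain ⟨u, hu⟩ := exists_eqOn_mulX (k := k)
    (F := F - differential (A (-ε)) G) (fun s hs ↦ sub_eq_zero.2 (hG hs)) j
  exact ⟨G, u, hu, eqOn_differential_of_mulX (Finset.mem_insert_self j J)
    (hA.eqOn_differential_sub hF G) hu⟩

lemma eqOn_differential_add {A : ι → Module.End k H} {S : Set (ι →₀ ℕ)} {F G G' : Series ι H}
    (h : EqOn (F - differential A G) (differential A G') S) :
    EqOn F (differential A (G + G')) S := by
  intro s hs
  have := h hs
  rw [map_add, Pi.add_apply, ← this, Pi.sub_apply, add_sub_cancel]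

/-- The hypothesis on `h` says that `h ε j` induces a null-homotopy of multiplication by `Xⱼ`. -/
theorem IsAnticommuting.isExactAt_of_homotopy [DecidableEq ι] (hA : IsAnticommuting A)
    (h : ℤˣ → ι → Module.End k H)
    (hh : ∀ ε i j u, A (-ε) i (h ε j u) + h (-ε) j (A ε i u) = if i = j then u else 0)
    (J : Finset ι) (ε : ℤˣ) (n : ℕ) : IsExactAt A J ε (n + 1) := by
  have homotopy (ε : ℤˣ) (j : ι) (u : Series ι H) :
      differential (A (-ε)) ((h ε j).compLeft _ u) +
        (h (-ε) j).compLeft _ (differential (A ε) u) = mulX k j u := by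
    have hi (i : ι) : (A (-ε) i).compLeft _ ((h ε j).compLeft _ u) +
        (h (-ε) j).compLeft _ ((A ε i).compLeft _ u) = if i = j then u else 0 := by
      ext s
      refine (hh ε i j (u s)).trans ?_
      split_ifs <;> rfl
    simp only [differential_apply, map_sum, ← mulX_compLeft, ← Finset.sum_add_distrib, ← map_add,
      hi, apply_ite (mulX k _), map_zero, Finset.sum_ite_eq', Finset.mem_univ, if_true]
  induction J using Finset.induction_on with
  | empty => exact isExactAt_empty ε n
  | insert j J _ ih =>
    intro F hF
    obtain ⟨G, u, hu, hu0⟩ := hA.exists_eqOn_sub_differential ih j hF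
    refine ⟨G + (h ε j).compLeft _ u, eqOn_differential_add (hu.trans fun s hs ↦ ?_)⟩
    have hs0 : (h (-ε) j).compLeft _ (differential (A ε) u) s = 0 := by
      rw [LinearMap.compLeft_apply, Function.comp_apply, hu0 hs, Pi.zero_apply, map_zero]
    rw [← homotopy ε j u, Pi.add_apply, hs0, add_zero]

/-- If `F` is a cycle modulo `Xⱼ`, its full boundary is `Xⱼ u`; correcting by a primitive of `u`
makes it a cycle. -/
lemma IsAnticommuting.isExactAt_of_insert [DecidableEq ι] (hA : IsAnticommuting A) {J : Finset ι}
    {j : ι} (hj : j ∉ J) {n : ℕ} (h : ∀ ε, IsExactAt A (insert j J) ε n) (ε : ℤˣ) :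
    IsExactAt A J ε n := by
  intro F hF
  obtain ⟨u, hu⟩ := exists_eqOn_mulX (k := k) hF j
  have hu0 : EqOn (differential (A (-ε)) u) 0 (monomials (insert j J) (n + 1)) := by
    refine eqOn_differential_of_mulX (Finset.mem_insert_self j J) (F := differential (A ε) F) ?_ hu
    have h0 := hA.differential_differential (-ε) F
    rw [neg_neg] at h0
    exact h0 ▸ fun _ _ ↦ rfl
  obtain ⟨G, hG⟩ := h (-ε) u hu0
  rw [neg_neg] at hG
  obtain ⟨K, hK⟩ := h ε (F - mulX k j G) fun s hs ↦ by
    have := (hu.trans (eqOn_mulX (k := k) hG j)) hs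
    rw [map_sub, Pi.sub_apply, this, differential_mulX, sub_self, Pi.zero_apply]
  refine ⟨K, fun s hs ↦ ?_⟩
  rw [← hK (monomials_subset_insert j J n hs), Pi.sub_apply, eqOn_mulX_zero hj G n hs,
    Pi.zero_apply, sub_zero]

/-- If `z` is a cycle and `Xⱼ z` is the boundary of `y`, then `y` is a cycle modulo `Xⱼ`, hence
equal to `Xⱼ u` up to a boundary, and `z` is the boundary of `u`. -/
lemma IsAnticommuting.isExactAt_insert [DecidableEq ι] (hA : IsAnticommuting A) {J : Finset ι}
    {j : ι} (hj : j ∉ J) {ε : ℤˣ} {n : ℕ} (hJ : IsExactAt A J (-ε) (n + 1))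
    (h : IsExactAt A (insert j J) ε (n + 2)) : IsExactAt A (insert j J) ε (n + 1) := by
  intro z hz
  have hXz := eqOn_mulX (k := k) hz j
  rw [← differential_mulX, map_zero] at hXz
  obtain ⟨y, hy⟩ := h (mulX k j z) hXz
  obtain ⟨w, hw⟩ := hJ y <|
    (hy.symm.mono (monomials_subset_insert j J _)).trans (eqOn_mulX_zero hj z _)
  obtain ⟨u, hu⟩ := exists_eqOn_mulX (k := k) (F := y - differential (A (- -ε)) w)
    (fun s hs ↦ sub_eq_zero.2 (hw hs)) j
  refine ⟨u, eqOn_of_eqOn_mulX (k := k) (Finset.mem_insert_self j J) fun s hs ↦ ?_⟩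
  rw [hy hs, ← differential_mulX, ← eqOn_differential _ hu hs, map_sub,
    hA.differential_differential, sub_zero]

theorem IsAnticommuting.isExactAt_of_eventually (hA : IsAnticommuting A) {J : Finset ι} {N : ℕ}
    (h : ∀ n ≥ N, ∀ ε, IsExactAt A J ε n) (ε : ℤˣ) (n : ℕ) : IsExactAt A J ε (n + 1) := by
  classical
  induction J using Finset.induction_on generalizing ε n with
  | empty => exact isExactAt_empty ε n
  | insert j J hj ih =>
    have hJ := ih fun n hn ↦ hA.isExactAt_of_insert hj (h n hn)
    have descend (m : ℕ) : ∀ n, N ≤ n + 1 + m → IsExactAt A (insert j J) ε (n + 1) := by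
      induction m with
      | zero => exact fun n hn ↦ h (n + 1) hn ε
      | succ m ihm => exact fun n hn ↦ hA.isExactAt_insert hj (hJ (-ε) n) (ihm (n + 1) (by lia))
    exact descend N n (by lia)

end Exactness

section Noetherian

open TensorProduct

variable {ι k H : Type*} [CommRing k] [AddCommGroup H] [Module k H]

/-- The inclusion of polynomials with coefficients in `H`, encoded as `k[X] ⊗ H`, into the formal
power series. -/
noncomputable def toSeries : MvPolynomial ι k ⊗[k] H →ₗ[k] Series ι H :=
  LinearMap.pi fun s ↦ TensorProduct.lid k H ∘ₗ (MvPolynomial.lcoeff k s).rTensor H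

lemma toSeries_tmul (p : MvPolynomial ι k) (u : H) (s : ι →₀ ℕ) :
    toSeries (p ⊗ₜ[k] u) s = p.coeff s • u := by
  simp [toSeries]

lemma toSeries_X_smul (j : ι) (z : MvPolynomial ι k ⊗[k] H) :
    toSeries ((MvPolynomial.X j : MvPolynomial ι k) • z) = mulX k j (toSeries z) := by
  classical
  induction z with
  | zero => simp only [smul_zero, map_zero]
  | add z w hz hw => simp only [smul_add, map_add, hz, hw]
  | tmul p u =>
    ext s
    rw [TensorProduct.smul_tmul', smul_eq_mul, toSeries_tmul]
    obtain hs | ⟨t, rfl⟩ := apply_eq_zero_or_exists_eq_add_single s j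
    · rw [mulX_apply_of_eq_zero hs, MvPolynomial.coeff_X_mul', if_neg (by simpa using hs),
        zero_smul]
    · rw [mulX_apply_add_single, toSeries_tmul, add_comm, MvPolynomial.coeff_X_mul]

lemma exists_toSeries_eq_zero_of_degree_gt (z : MvPolynomial ι k ⊗[k] H) :
    ∃ N, ∀ s : ι →₀ ℕ, N < s.degree → toSeries z s = 0 := by
  induction z with
  | zero => exact ⟨0, fun s _ ↦ by simp⟩
  | add z w hz hw =>
    obtain ⟨a, ha⟩ := hz
    obtain ⟨b, hb⟩ := hw
    refine ⟨max a b, fun s hs ↦ ?_⟩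
    rw [map_add, Pi.add_apply, ha s (by lia), hb s (by lia), add_zero]
  | tmul p u =>
    refine ⟨p.totalDegree, fun s hs ↦ ?_⟩
    rw [toSeries_tmul, MvPolynomial.coeff_eq_zero_of_totalDegree_lt hs, zero_smul]

lemma exists_toSeries_eq_ite [Finite ι] (F : Series ι H) (n : ℕ) :
    ∃ z : MvPolynomial ι k ⊗[k] H,
      ∀ s : ι →₀ ℕ, toSeries z s = if s.degree = n then F s else 0 := by
  classical
  have hfin : {s : ι →₀ ℕ | s.degree = n}.Finite :=
    (Finsupp.finite_of_degree_le n).subset fun s hs ↦ hs.le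
  refine ⟨∑ t ∈ hfin.toFinset, MvPolynomial.monomial t (1 : k) ⊗ₜ[k] F t, fun s ↦ ?_⟩
  simp [toSeries_tmul, MvPolynomial.coeff_monomial, ite_smul]

lemma exists_eq_C_add_sum_X_mul [Fintype ι] (p : MvPolynomial ι k) :
    ∃ (a : k) (q : ι → MvPolynomial ι k), p = MvPolynomial.C a + ∑ i, MvPolynomial.X i * q i := by
  classical
  induction p using MvPolynomial.induction_on with
  | C a => exact ⟨a, 0, by simp⟩
  | add p p' hp hp' =>
    obtain ⟨a, q, rfl⟩ := hp
    obtain ⟨a', q', rfl⟩ := hp'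
    refine ⟨a + a', q + q', ?_⟩
    simp only [map_add, Pi.add_apply, mul_add, Finset.sum_add_distrib]
    abel
  | mul_X p j _ => exact ⟨0, Pi.single j p, by simp [Pi.single_apply, mul_comm]⟩

lemma exists_eq_add_sum_X_smul_of_mem_span [Fintype ι] {M : Type*} [AddCommGroup M]
    [Module (MvPolynomial ι k) M] [Module k M] [IsScalarTower k (MvPolynomial ι k) M] {T : Set M}
    {m : M} (hm : m ∈ Submodule.span (MvPolynomial ι k) T) :
    ∃ g ∈ Submodule.span k T, ∃ z : ι → M,
      (∀ i, z i ∈ Submodule.span (MvPolynomial ι k) T) ∧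
      m = g + ∑ i, (MvPolynomial.X i : MvPolynomial ι k) • z i := by
  induction hm using Submodule.span_induction with
  | mem x hx => exact ⟨x, Submodule.subset_span hx, 0, fun _ ↦ zero_mem _, by simp⟩
  | zero => exact ⟨0, zero_mem _, 0, fun _ ↦ zero_mem _, by simp⟩
  | add x y _ _ hx hy =>
    obtain ⟨g, hg, z, hz, rfl⟩ := hx
    obtain ⟨g', hg', z', hz', rfl⟩ := hy
    refine ⟨g + g', add_mem hg hg', z + z', fun i ↦ add_mem (hz i) (hz' i), ?_⟩
    simp only [Pi.add_apply, smul_add, Finset.sum_add_distrib]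
    abel
  | smul p x hx hdecomp =>
    obtain ⟨g, hg, z, hz, hgz⟩ := hdecomp
    obtain ⟨a, q, hp⟩ := exists_eq_C_add_sum_X_mul p
    refine ⟨a • g, Submodule.smul_mem _ a hg, fun i ↦ a • z i + q i • x,
      fun i ↦ add_mem (Submodule.smul_of_tower_mem _ a (hz i)) (Submodule.smul_mem _ _ hx), ?_⟩
    have hCx : (MvPolynomial.C a : MvPolynomial ι k) • x = a • x := by
      rw [← MvPolynomial.algebraMap_eq, algebraMap_smul]
    have hax : a • x = a • g + ∑ i, (MvPolynomial.X i : MvPolynomial ι k) • a • z i := by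
      conv_lhs => rw [hgz, smul_add, Finset.smul_sum]
      simp only [smul_comm a]
    simp only [hp, add_smul, Finset.sum_smul, hCx, hax, smul_add, Finset.sum_add_distrib, mul_smul,
      add_assoc]

variable [Fintype ι]

/-- The polynomials with coefficients in `H` that are cycles for the differential attached to
`A`. -/
noncomputable def cycles (A : ι → Module.End k H) :
    Submodule (MvPolynomial ι k) (MvPolynomial ι k ⊗[k] H) where
  __ := LinearMap.ker (differential A ∘ₗ toSeries)
  smul_mem' p z hz := by
    induction p using MvPolynomial.induction_on generalizing z with
    | C a =>
      rw [← MvPolynomial.algebraMap_eq, algebraMap_smul]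
      exact Submodule.smul_mem (LinearMap.ker (differential A ∘ₗ toSeries)) a hz
    | add p q hp hq => exact add_smul p q z ▸ (LinearMap.ker _).add_mem (hp z hz) (hq z hz)
    | mul_X p j hp =>
      rw [mul_smul]
      refine hp _ ?_
      change differential A (toSeries ((MvPolynomial.X j : MvPolynomial ι k) • z)) = 0
      rw [toSeries_X_smul, differential_mulX, show differential A (toSeries z) = 0 from hz,
        map_zero]

lemma mem_cycles {A : ι → Module.End k H} {z : MvPolynomial ι k ⊗[k] H} :
    z ∈ cycles A ↔ differential A (toSeries z) = 0 := Iff.rfl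

lemma exists_mem_cycles_eqOn {A : ι → Module.End k H} {n : ℕ} {F : Series ι H}
    (hF : EqOn (differential A F) 0 (monomials Finset.univ (n + 1))) :
    ∃ z ∈ cycles A, EqOn F (toSeries z) (monomials Finset.univ n) := by
  obtain ⟨z, hz⟩ := exists_toSeries_eq_ite (k := k) F n
  have hFz : EqOn F (toSeries z) (monomials Finset.univ n) := fun s hs ↦ by
    rw [hz, if_pos hs.2]
  refine ⟨z, mem_cycles.2 (funext fun s ↦ ?_), hFz⟩
  obtain h0 | hpos := Nat.eq_zero_or_pos s.degree
  · rw [(Finsupp.degree_eq_zero_iff s).1 h0, differential_apply_zero, Pi.zero_apply]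
  obtain ⟨m, hm⟩ := Nat.exists_eq_succ_of_ne_zero hpos.ne'
  have hs : s ∈ monomials Finset.univ (m + 1) := ⟨Finset.subset_univ _, hm⟩
  obtain rfl | hmn := eq_or_ne m n
  · exact (eqOn_differential A hFz hs).symm.trans (hF hs)
  · have hz0 : EqOn (toSeries z) 0 (monomials Finset.univ m) := fun t ht ↦ by
      rw [hz, if_neg (ht.2.trans_ne hmn), Pi.zero_apply]
    rw [eqOn_differential A hz0 hs, map_zero]

/-- The cycles form a Noetherian module over `k[X]`, so they are generated in bounded degrees. -/
theorem exists_eqOn_sum_mulX [IsNoetherianRing k] [Module.Finite k H] (A : ι → Module.End k H) :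
    ∃ N, ∀ n ≥ N, ∀ F : Series ι H,
      EqOn (differential A F) 0 (monomials Finset.univ (n + 2)) →
      ∃ z : ι → Series ι H, (∀ i, differential A (z i) = 0) ∧
        EqOn F (∑ i, mulX k i (z i)) (monomials Finset.univ (n + 1)) := by
  obtain ⟨T, hT⟩ : (cycles A).FG := IsNoetherian.noetherian _
  choose N hN using exists_toSeries_eq_zero_of_degree_gt (ι := ι) (k := k) (H := H)
  refine ⟨T.sup N, fun n hn F hF ↦ ?_⟩
  obtain ⟨z, hz, hFz⟩ := exists_mem_cycles_eqOn hF
  obtain ⟨g, hg, w, hw, rfl⟩ := exists_eq_add_sum_X_smul_of_mem_span (hT ▸ hz)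
  refine ⟨fun i ↦ toSeries (w i), fun i ↦ mem_cycles.1 (hT ▸ hw i), hFz.trans fun s hs ↦ ?_⟩
  have hg0 : toSeries g s = 0 := by
    have hle : Submodule.span k (T : Set (MvPolynomial ι k ⊗[k] H)) ≤
        LinearMap.ker (LinearMap.proj s ∘ₗ toSeries) := Submodule.span_le.2 fun t ht ↦ by
      have hdeg : N t < s.degree := by
        have := Finset.le_sup (f := N) ht
        have := hs.2
        lia
      exact hN t s hdeg
    exact hle hg
  rw [map_add, Pi.add_apply, hg0, zero_add, map_sum]
  simp only [toSeries_X_smul]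

theorem IsExactAt.eventually [IsNoetherianRing k] [Module.Finite k H]
    (A : ℤˣ → ι → Module.End k H) (ε : ℤˣ) :
    ∃ N, ∀ n ≥ N, IsExactAt A Finset.univ ε n → ∀ m ≥ n, IsExactAt A Finset.univ ε m := by
  obtain ⟨N, hN⟩ := exists_eqOn_sum_mulX (A ε)
  refine ⟨N, fun n hn h m hm ↦ ?_⟩
  induction m, hm using Nat.le_induction with
  | base => exact h
  | succ m hm ih =>
    intro F hF
    obtain ⟨z, hz, hFz⟩ := hN m (hn.trans hm) F hF
    choose G hG using fun i ↦ ih (z i) fun s _ ↦ congrFun (hz i) s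
    refine ⟨∑ i, mulX k i (G i), hFz.trans fun s hs ↦ ?_⟩
    simp only [map_sum, differential_mulX, Finset.sum_apply]
    exact Finset.sum_congr rfl fun i _ ↦ eqOn_mulX (hG i) i hs

end Noetherian

section Dichotomy

variable {ι k H : Type*} [Fintype ι] [CommRing k] [AddCommGroup H] [Module k H]

theorem IsAnticommuting.isExactAt_or_eventually_not [IsNoetherianRing k] [Module.Finite k H]
    {A : ℤˣ → ι → Module.End k H} (hA : IsAnticommuting A) :
    (∀ n, 0 < n → IsExactAt A Finset.univ ((-1) ^ n) n) ∨
      ∃ m₀, (∀ n ≥ m₀, Even n → ¬ IsExactAt A Finset.univ ((-1) ^ n) n) ∨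
        ∀ n ≥ m₀, Odd n → ¬ IsExactAt A Finset.univ ((-1) ^ n) n := by
  choose N hN using IsExactAt.eventually A
  by_contra! ⟨⟨n, hn, hne⟩, h⟩
  obtain ⟨⟨p, hp, hpe, hp'⟩, q, hq, hqo, hq'⟩ := h (max (N 1) (N (-1)))
  rw [hpe.neg_one_pow] at hp'
  rw [hqo.neg_one_pow] at hq'
  have eventually_exact : ∀ m ≥ max p q, ∀ ε, IsExactAt A Finset.univ ε m := by
    intro m hm ε
    obtain rfl | rfl := Int.units_eq_one_or ε
    · exact hN 1 p ((le_max_left _ _).trans hp) hp' m ((le_max_left p q).trans hm)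
    · exact hN (-1) q ((le_max_right _ _).trans hq) hq' m ((le_max_right p q).trans hm)
  obtain ⟨m, rfl⟩ := Nat.exists_eq_succ_of_ne_zero hn.ne'
  exact hne (hA.isExactAt_of_eventually eventually_exact _ m)

end Dichotomy

section ShortExact

variable {ι k H₁ H₂ H₃ : Type*} [CommRing k] [AddCommGroup H₁] [Module k H₁]
  [AddCommGroup H₂] [Module k H₂] [AddCommGroup H₃] [Module k H₃]

lemma eqOn_differential_zero_one_iff [Fintype ι] {A : ι → Module.End k H₁} {F : Series ι H₁} :
    EqOn (differential A F) 0 (monomials Finset.univ 1) ↔ ∀ j, A j (F 0) = 0 := by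
  classical
  have coeff (j : ι) : differential A F (Finsupp.single j 1) = A j (F 0) := by
    simp [differential_apply, mulX, Finsupp.single_apply, ite_not]
  refine ⟨fun h j ↦ ?_, fun h s hs ↦ ?_⟩
  · exact (coeff j).symm.trans (h ⟨Finset.subset_univ _, Finsupp.degree_single j 1⟩)
  · rw [differential_apply, Finset.sum_apply]
    refine Finset.sum_eq_zero fun i _ ↦ ?_
    obtain hi | ⟨t, rfl⟩ := apply_eq_zero_or_exists_eq_add_single s i
    · exact mulX_apply_of_eq_zero hi _
    · have ht : t = 0 := (Finsupp.degree_eq_zero_iff t).1 (add_single_mem_monomials.1 hs).2.2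
      rw [mulX_apply_add_single, ht]
      exact h i

/-- A short exact sequence `H₁ → H₂ → H₃` of modules carrying families of operators which the maps
intertwine. -/
structure IsShortExact (A₁ : ℤˣ → ι → Module.End k H₁) (A₂ : ℤˣ → ι → Module.End k H₂)
    (A₃ : ℤˣ → ι → Module.End k H₃) (α : H₁ →ₗ[k] H₂) (β : H₂ →ₗ[k] H₃) : Prop where
  injective : Function.Injective α
  exact : Function.Exact α β
  surjective : Function.Surjective β
  comp_left (ε : ℤˣ) (i : ι) : A₂ ε i ∘ₗ α = α ∘ₗ A₁ ε i
  comp_right (ε : ℤˣ) (i : ι) : A₃ ε i ∘ₗ β = β ∘ₗ A₂ ε i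

namespace IsShortExact

variable {A₁ : ℤˣ → ι → Module.End k H₁} {A₂ : ℤˣ → ι → Module.End k H₂}
  {A₃ : ℤˣ → ι → Module.End k H₃} {α : H₁ →ₗ[k] H₂} {β : H₂ →ₗ[k] H₃}

lemma exists_eqOn_compLeft (h : IsShortExact A₁ A₂ A₃ α β) {S : Set (ι →₀ ℕ)} {F : Series ι H₂}
    (hF : EqOn (β.compLeft _ F) 0 S) : ∃ G : Series ι H₁, EqOn (α.compLeft _ G) F S := by
  have hpre (s : S) : ∃ u, α u = F s := (h.exact (F s)).1 (hF s.2)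
  choose G hG using hpre
  classical
  exact ⟨fun s ↦ if hs : s ∈ S then G ⟨s, hs⟩ else 0, fun s hs ↦ by simp [hs, hG]⟩

lemma exists_compLeft_eq (h : IsShortExact A₁ A₂ A₃ α β) (ψ : Series ι H₃) :
    ∃ Ψ : Series ι H₂, β.compLeft _ Ψ = ψ :=
  h.surjective.comp_left ψ

lemma eqOn_of_compLeft (h : IsShortExact A₁ A₂ A₃ α β) {S : Set (ι →₀ ℕ)} {F G : Series ι H₁}
    (hFG : EqOn (α.compLeft _ F) (α.compLeft _ G) S) : EqOn F G S :=
  fun _ hs ↦ h.injective (hFG hs)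

lemma compLeft_compLeft (h : IsShortExact A₁ A₂ A₃ α β) (F : Series ι H₁) :
    β.compLeft (ι →₀ ℕ) (α.compLeft _ F) = 0 :=
  funext fun s ↦ h.exact.apply_apply_eq_zero (F s)

variable [Fintype ι] {J : Finset ι} {ε : ℤˣ} {n : ℕ}

/-- The right-hand side says that the connecting map from the homology of `H₃` vanishes. -/
lemma isExactAt_iff_exists_lift (h : IsShortExact A₁ A₂ A₃ α β) (hA₂ : IsAnticommuting A₂)
    (hex : IsExactAt A₂ J ε (n + 1)) :
    IsExactAt A₁ J ε (n + 1) ↔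
      ∀ ψ : Series ι H₃, EqOn (differential (A₃ (-ε)) ψ) 0 (monomials J (n + 1)) →
        ∃ Ψ : Series ι H₂, EqOn (differential (A₂ (-ε)) Ψ) 0 (monomials J (n + 1)) ∧
          EqOn (β.compLeft _ Ψ) ψ (monomials J n) := by
  refine ⟨fun h₁ ψ hψ ↦ ?_, fun hlift F hF ↦ ?_⟩
  · obtain ⟨Ψ, rfl⟩ := h.exists_compLeft_eq ψ
    rw [differential_compLeft (h.comp_right _)] at hψ
    obtain ⟨F, hF⟩ := h.exists_eqOn_compLeft hψ
    obtain ⟨G, hG⟩ := h₁ F <| h.eqOn_of_compLeft <| by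
      rw [← differential_compLeft (h.comp_left ε), map_zero]
      refine (eqOn_differential _ hF).trans ?_
      rw [hA₂.differential_differential]
      exact fun _ _ ↦ rfl
    refine ⟨Ψ - α.compLeft _ G, fun s hs ↦ ?_, ?_⟩
    · rw [map_sub, differential_compLeft (h.comp_left _), Pi.sub_apply, ← hF hs,
        eqOn_compLeft α hG hs, sub_self, Pi.zero_apply]
    · rw [map_sub, h.compLeft_compLeft, sub_zero]
      exact fun _ _ ↦ rfl
  · obtain ⟨Ψ₀, hΨ₀⟩ := hex (α.compLeft _ F) <| by
      rw [differential_compLeft (h.comp_left ε), ← map_zero (α.compLeft (ι →₀ ℕ))]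
      exact eqOn_compLeft α hF
    obtain ⟨Ψ, hΨ, hβΨ⟩ := hlift (β.compLeft _ Ψ₀) <| by
      rw [differential_compLeft (h.comp_right _), ← h.compLeft_compLeft F]
      exact (eqOn_compLeft β hΨ₀).symm
    obtain ⟨G, hG⟩ := h.exists_eqOn_compLeft (F := Ψ₀ - Ψ) (S := monomials J n) fun s hs ↦ by
      rw [map_sub, Pi.sub_apply, hβΨ hs, sub_self, Pi.zero_apply]
    refine ⟨G, h.eqOn_of_compLeft fun s hs ↦ ?_⟩
    rw [← differential_compLeft (h.comp_left _), eqOn_differential _ hG hs, map_sub, Pi.sub_apply,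
      hΨ hs, Pi.zero_apply, sub_zero, hΨ₀ hs]

lemma isExactAt_iff (h : IsShortExact A₁ A₂ A₃ α β) (hA₂ : IsAnticommuting A₂)
    (hex : ∀ (ε : ℤˣ) (n : ℕ), IsExactAt A₂ J ε (n + 1)) :
    IsExactAt A₁ J ε (n + 2) ↔ IsExactAt A₃ J (-ε) (n + 1) := by
  rw [h.isExactAt_iff_exists_lift hA₂ (hex ε (n + 1))]
  refine forall₂_congr fun ψ _ ↦ ⟨fun ⟨Ψ, hΨ, hβΨ⟩ ↦ ?_, fun ⟨G, hG⟩ ↦ ?_⟩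
  · obtain ⟨G, hG⟩ := hex (-ε) n Ψ hΨ
    refine ⟨β.compLeft _ G, hβΨ.symm.trans ?_⟩
    rw [differential_compLeft (h.comp_right _)]
    exact eqOn_compLeft β hG
  · obtain ⟨G, rfl⟩ := h.exists_compLeft_eq G
    refine ⟨differential (A₂ (- -ε)) G, ?_, ?_⟩
    · rw [hA₂.differential_differential]
      exact fun _ _ ↦ rfl
    · rw [← differential_compLeft (h.comp_right _)]
      exact hG.symm

lemma isExactAt_one_iff (h : IsShortExact A₁ A₂ A₃ α β) (hA₂ : IsAnticommuting A₂)
    (hex : IsExactAt A₂ Finset.univ ε 1) :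
    IsExactAt A₁ Finset.univ ε 1 ↔
      ∀ u : H₃, (∀ i, A₃ (-ε) i u = 0) → ∃ v : H₂, (∀ i, A₂ (-ε) i v = 0) ∧ β v = u := by
  have h0 : (0 : ι →₀ ℕ) ∈ monomials Finset.univ 0 := ⟨Finset.subset_univ _, by simp⟩
  simp only [h.isExactAt_iff_exists_lift hA₂ hex, zero_add, eqOn_differential_zero_one_iff]
  refine ⟨fun H u hu ↦ ?_, fun H ψ hψ ↦ ?_⟩
  · obtain ⟨Ψ, hΨ, hβΨ⟩ := H (fun _ ↦ u) hu
    exact ⟨Ψ 0, hΨ, hβΨ h0⟩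
  · obtain ⟨v, hv, hβv⟩ := H (ψ 0) hψ
    refine ⟨fun _ ↦ v, hv, fun s hs ↦ ?_⟩
    rw [(Finsupp.degree_eq_zero_iff s).1 hs.2]
    exact hβv

end IsShortExact

end ShortExact

section TwistedCommutator

variable {ι k R M N : Type*} [CommRing k] [Ring R] [Algebra k R]
  [AddCommGroup M] [Module k M] [Module R M] [IsScalarTower k R M]
  [AddCommGroup N] [Module k N] [Module R N] [IsScalarTower k R N]

variable (k M N) in
/-- The operators `f ↦ xᵢ f - ε f xᵢ` on the `k`-linear maps `M → N`, for elements `xᵢ` of `R`. -/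
noncomputable def twistedCommutator (x : ι → R) (ε : ℤˣ) (i : ι) : Module.End k (M →ₗ[k] N) :=
  LinearMap.compRight k (Algebra.lsmul k k N (x i)) -
    ε • LinearMap.lcomp k N (Algebra.lsmul k k M (x i))

@[simp]
lemma twistedCommutator_apply (x : ι → R) (ε : ℤˣ) (i : ι) (f : M →ₗ[k] N) (m : M) :
    twistedCommutator k M N x ε i f m = x i • f m - ε • f (x i • m) := rfl

lemma twistedCommutator_lcomp {M' : Type*} [AddCommGroup M'] [Module k M'] [Module R M']
    [IsScalarTower k R M'] (x : ι → R) (g : M →ₗ[R] M') (ε : ℤˣ) (i : ι) :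
    twistedCommutator k M N x ε i ∘ₗ LinearMap.lcomp k N (g.restrictScalars k) =
      LinearMap.lcomp k N (g.restrictScalars k) ∘ₗ twistedCommutator k M' N x ε i := by
  ext f m
  simp

lemma twistedCommutator_restrictScalars (x : ι → R) (i : ι) (g : M →ₗ[R] N) :
    twistedCommutator k M N x 1 i (g.restrictScalars k) = 0 := by
  ext m
  simp

lemma isAnticommuting_twistedCommutator {x : ι → R} (hsq : ∀ i, x i * x i = 0)
    (hanti : ∀ i j, x i * x j + x j * x i = 0) :
    IsAnticommuting (twistedCommutator k M N x) where
  comp_self ε i := by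
    ext f m
    obtain rfl | rfl := Int.units_eq_one_or ε <;>
      simp [smul_smul, hsq, smul_sub, smul_add]
  comp_add_comp ε i j := by
    ext f m
    have hN : x i • x j • f m + x j • x i • f m = 0 := by
      rw [smul_smul, smul_smul, ← add_smul, hanti, zero_smul]
    have hM : f (x i • x j • m) + f (x j • x i • m) = 0 := by
      rw [← map_add, smul_smul, smul_smul, ← add_smul, hanti, zero_smul, map_zero]
    have key : (twistedCommutator k M N x ε i ∘ₗ twistedCommutator k M N x (-ε) j +
        twistedCommutator k M N x ε j ∘ₗ twistedCommutator k M N x (-ε) i) f m =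
        (x i • x j • f m + x j • x i • f m) - (f (x i • x j • m) + f (x j • x i • m)) := by
      obtain rfl | rfl := Int.units_eq_one_or ε <;>
      · simp only [LinearMap.add_apply, LinearMap.comp_apply, twistedCommutator_apply, neg_neg,
          Units.neg_smul, one_smul, sub_neg_eq_add, smul_add, smul_sub]
        abel
    rw [key, hN, hM, sub_zero]
    rfl

theorem isExactAt_twistedCommutator_of_contraction [Fintype ι] [DecidableEq ι] {x : ι → R}
    (hx : IsAnticommuting (twistedCommutator k M N x)) (d : ι → Module.End k M)
    (hd : ∀ i j m, d j (x i • m) + x i • d j m = if i = j then m else 0) (J : Finset ι) (ε : ℤˣ)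
    (n : ℕ) : IsExactAt (twistedCommutator k M N x) J ε (n + 1) := by
  refine hx.isExactAt_of_homotopy (fun ε j ↦ ε • LinearMap.lcomp k N (d j))
    (fun ε i j f ↦ LinearMap.ext fun m ↦ ?_) J ε n
  have hf : f (d j (x i • m)) + f (x i • d j m) = if i = j then f m else 0 := by
    rw [← map_add, hd, apply_ite f, map_zero]
  have key : (twistedCommutator k M N x (-ε) i ((ε • LinearMap.lcomp k N (d j)) f) +
      ((-ε) • LinearMap.lcomp k N (d j)) (twistedCommutator k M N x ε i f)) m =
      f (d j (x i • m)) + f (x i • d j m) := by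
    obtain rfl | rfl := Int.units_eq_one_or ε <;>
    · simp only [neg_neg, Units.neg_smul, one_smul, LinearMap.neg_apply, map_neg,
        LinearMap.add_apply, twistedCommutator_apply, LinearMap.lcomp_apply, neg_sub,
        sub_neg_eq_add]
      abel
  rw [key, hf]
  split_ifs <;> rfl

end TwistedCommutator

section ExteriorAlgebra

lemma finite_exteriorAlgebra (k V : Type*) [CommRing k] [AddCommGroup V] [Module k V]
    [Module.Free k V] [Module.Finite k V] : Module.Finite k (ExteriorAlgebra k V) := by
  nontriviality k
  exact .of_basis (Module.finBasis k V).ExteriorAlgebra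

variable {ι k V : Type*} [CommRing k] [AddCommGroup V] [Module k V] (b : Module.Basis ι k V)
  {M N : Type*} [AddCommGroup M] [Module k M] [Module (ExteriorAlgebra k V) M]
  [IsScalarTower k (ExteriorAlgebra k V) M]
  [AddCommGroup N] [Module k N] [Module (ExteriorAlgebra k V) N]
  [IsScalarTower k (ExteriorAlgebra k V) N]

variable (M N) in
/-- The operators `f ↦ xᵢ f - ε f xᵢ` on `Hom_k(M, N)`, for the generators `xᵢ` of the exterior
algebra given by a basis. -/
noncomputable abbrev homOperators : ℤˣ → ι → Module.End k (M →ₗ[k] N) :=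
  twistedCommutator k M N fun i ↦ ExteriorAlgebra.ι k (b i)

lemma isAnticommuting_homOperators : IsAnticommuting (homOperators b M N) :=
  isAnticommuting_twistedCommutator (fun i ↦ ExteriorAlgebra.ι_sq_zero (b i))
    fun i j ↦ ExteriorAlgebra.ι_add_mul_swap (b i) (b j)

lemma exists_contraction_of_projective [DecidableEq ι]
    [Module.Projective (ExteriorAlgebra k V) M] :
    ∃ d : ι → Module.End k M, ∀ i j m,
      d j (ExteriorAlgebra.ι k (b i) • m) + ExteriorAlgebra.ι k (b i) • d j m =
        if i = j then m else 0 := by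
  obtain ⟨s, hs⟩ := Module.projective_def'.1 ‹Module.Projective (ExteriorAlgebra k V) M›
  let π : (M →₀ ExteriorAlgebra k V) →ₗ[ExteriorAlgebra k V] M := Finsupp.linearCombination _ id
  let e (j : ι) : Module.End k (M →₀ ExteriorAlgebra k V) :=
    Finsupp.mapRange.linearMap (CliffordAlgebra.contractLeft (b.coord j))
  have he (i j : ι) (v : M →₀ ExteriorAlgebra k V) :
      e j (ExteriorAlgebra.ι k (b i) • v) + ExteriorAlgebra.ι k (b i) • e j v =
        if i = j then v else 0 := by
    ext m
    have hm : e j (ExteriorAlgebra.ι k (b i) • v) m =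
        b.coord j (b i) • v m - (ExteriorAlgebra.ι k (b i) • e j v) m :=
      CliffordAlgebra.contractLeft_ι_mul (b.coord j) (b i) (v m)
    rw [Finsupp.add_apply, hm, sub_add_cancel, b.coord_apply, b.repr_self, Finsupp.single_apply]
    split_ifs <;> simp
  refine ⟨fun j ↦ π.restrictScalars k ∘ₗ e j ∘ₗ s.restrictScalars k, fun i j m ↦ ?_⟩
  have hπs : π (s m) = m := LinearMap.congr_fun hs m
  simp only [LinearMap.comp_apply, LinearMap.restrictScalars_apply, map_smul]
  rw [← map_smul π, ← map_add, he, apply_ite π, hπs, map_zero]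

theorem isExactAt_homOperators_of_projective [Fintype ι]
    [Module.Projective (ExteriorAlgebra k V) M] (J : Finset ι) (ε : ℤˣ) (n : ℕ) :
    IsExactAt (homOperators b M N) J ε (n + 1) := by
  classical
  obtain ⟨d, hd⟩ := exists_contraction_of_projective b (M := M)
  exact isExactAt_twistedCommutator_of_contraction (isAnticommuting_homOperators b) d hd J ε n

lemma exists_restrictScalars_eq {f : M →ₗ[k] N} (hf : ∀ i, homOperators b M N 1 i f = 0) :
    ∃ g : M →ₗ[ExteriorAlgebra k V] N, g.restrictScalars k = f := by
  have hgen (i : ι) (m : M) : f (ExteriorAlgebra.ι k (b i) • m) =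
      ExteriorAlgebra.ι k (b i) • f m := by
    have hm := LinearMap.congr_fun (hf i) m
    rw [twistedCommutator_apply, one_smul, LinearMap.zero_apply, sub_eq_zero] at hm
    exact hm.symm
  have hι (v : V) (m : M) : f (ExteriorAlgebra.ι k v • m) = ExteriorAlgebra.ι k v • f m := by
    have hlin : f ∘ₗ (LinearMap.toSpanSingleton (ExteriorAlgebra k V) M m).restrictScalars k ∘ₗ
        ExteriorAlgebra.ι k = (LinearMap.toSpanSingleton (ExteriorAlgebra k V) N
          (f m)).restrictScalars k ∘ₗ ExteriorAlgebra.ι k := b.ext fun i ↦ hgen i m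
    exact LinearMap.congr_fun hlin v
  have hsmul (r : ExteriorAlgebra k V) (m : M) : f (r • m) = r • f m := by
    induction r using ExteriorAlgebra.induction generalizing m with
    | algebraMap a => simp only [algebraMap_smul, map_smul]
    | ι v => exact hι v m
    | mul r s hr hs => rw [mul_smul, hr, hs, mul_smul]
    | add r s hr hs => rw [add_smul, map_add, hr, hs, add_smul]
  exact ⟨{ f with map_smul' := hsmul }, rfl⟩

end ExteriorAlgebra

section Factor

variable {R X Y Z K N : Type*} [Ring R] [AddCommGroup X] [Module R X] [AddCommGroup Y] [Module R Y]
  [AddCommGroup Z] [Module R Z] [AddCommGroup K] [Module R K] [AddCommGroup N] [Module R N]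
  {e : X →ₗ[R] Y} {q : Y →ₗ[R] K}

lemma exists_comp_eq_of_exact (h : Function.Exact e q) (hq : Function.Surjective q)
    {f : Y →ₗ[R] N} (hf : f ∘ₗ e = 0) : ∃ u : K →ₗ[R] N, u ∘ₗ q = f := by
  refine ⟨(LinearMap.range e).liftQ f (LinearMap.range_le_ker_iff.2 hf) ∘ₗ
    (h.linearEquivOfSurjective hq).symm, LinearMap.ext fun y ↦ ?_⟩
  simp only [LinearMap.comp_apply, LinearEquiv.coe_coe,
    Function.Exact.linearEquivOfSurjective_symm_apply, Submodule.liftQ_apply]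

lemma forall_exists_comp_eq_iff (h : Function.Exact e q) (hq : Function.Surjective q)
    (i : K →ₗ[R] Z) :
    (∀ u : K →ₗ[R] N, ∃ v : Z →ₗ[R] N, v ∘ₗ i = u) ↔
      ∀ f : Y →ₗ[R] N, f ∘ₗ e = 0 → ∃ g : Z →ₗ[R] N, g ∘ₗ (i ∘ₗ q) = f := by
  refine ⟨fun H f hf ↦ ?_, fun H u ↦ ?_⟩
  · obtain ⟨u, rfl⟩ := exists_comp_eq_of_exact h hq hf
    obtain ⟨v, rfl⟩ := H u
    exact ⟨v, rfl⟩
  · obtain ⟨g, hg⟩ := H (u ∘ₗ q) (by rw [LinearMap.comp_assoc, h.linearMap_comp_eq_zero,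
      LinearMap.comp_zero])
    exact ⟨g, (LinearMap.cancel_right hq).1 hg⟩

lemma exact_subtype_range (h : Function.Exact e q) :
    Function.Exact (LinearMap.range e).subtype q :=
  LinearMap.exact_iff.2 (by rw [Submodule.range_subtype, h.linearMap_ker_eq])

lemma exact_rangeRestrict (h : Function.Exact e q) : Function.Exact e q.rangeRestrict :=
  LinearMap.exact_iff.2 (by rw [LinearMap.ker_rangeRestrict, h.linearMap_ker_eq])

end Factor

section Resolution

universe w

variable {ι k V : Type*} [Field k] [AddCommGroup V] [Module k V] (b : Module.Basis ι k V)
  {K P M N : Type*} [AddCommGroup K] [Module k K] [Module (ExteriorAlgebra k V) K]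
  [IsScalarTower k (ExteriorAlgebra k V) K]
  [AddCommGroup P] [Module k P] [Module (ExteriorAlgebra k V) P]
  [IsScalarTower k (ExteriorAlgebra k V) P]
  [AddCommGroup M] [Module k M] [Module (ExteriorAlgebra k V) M]
  [IsScalarTower k (ExteriorAlgebra k V) M]
  [AddCommGroup N] [Module k N] [Module (ExteriorAlgebra k V) N]
  [IsScalarTower k (ExteriorAlgebra k V) N]

lemma isShortExact_homOperators {i : K →ₗ[ExteriorAlgebra k V] P} {p : P →ₗ[ExteriorAlgebra k V] M}
    (hi : Function.Injective i) (hip : Function.Exact i p) (hp : Function.Surjective p) :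
    IsShortExact (homOperators b M N) (homOperators b P N) (homOperators b K N)
      (LinearMap.lcomp k N (p.restrictScalars k)) (LinearMap.lcomp k N (i.restrictScalars k)) where
  injective := LinearMap.lcomp_injective_of_surjective _ hp
  exact := LinearMap.exact_lcomp_of_exact_of_surjective _ hip hp
  surjective f := by
    obtain ⟨r, hr⟩ := (i.restrictScalars k).exists_leftInverse_of_injective
      (LinearMap.ker_eq_bot.2 hi)
    exact ⟨f ∘ₗ r, by rw [LinearMap.lcomp_apply', LinearMap.comp_assoc, hr, LinearMap.comp_id]⟩
  comp_left ε j := twistedCommutator_lcomp _ p ε j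
  comp_right ε j := twistedCommutator_lcomp _ i ε j

variable [Fintype ι] [Module.Projective (ExteriorAlgebra k V) P]

lemma isExactAt_homOperators_one_iff {i : K →ₗ[ExteriorAlgebra k V] P}
    {p : P →ₗ[ExteriorAlgebra k V] M} (hi : Function.Injective i) (hip : Function.Exact i p)
    (hp : Function.Surjective p) :
    IsExactAt (homOperators b M N) Finset.univ (-1) 1 ↔
      ∀ u : K →ₗ[ExteriorAlgebra k V] N, ∃ v : P →ₗ[ExteriorAlgebra k V] N, v ∘ₗ i = u := by
  rw [(isShortExact_homOperators b hi hip hp).isExactAt_one_iff (isAnticommuting_homOperators b)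
    (isExactAt_homOperators_of_projective b _ _ 0), neg_neg]
  refine ⟨fun h u ↦ ?_, fun h f hf ↦ ?_⟩
  · obtain ⟨g, hg, hgu⟩ := h (u.restrictScalars k) fun j ↦ twistedCommutator_restrictScalars _ j u
    obtain ⟨v, rfl⟩ := exists_restrictScalars_eq b hg
    exact ⟨v, LinearMap.restrictScalars_injective k hgu⟩
  · obtain ⟨u, rfl⟩ := exists_restrictScalars_eq b hf
    obtain ⟨v, rfl⟩ := h u
    exact ⟨v.restrictScalars k, fun j ↦ twistedCommutator_restrictScalars _ j v, rfl⟩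

theorem isExactAt_homOperators_iff_of_resolution (n : ℕ) {X : ℕ → Type w} {M : Type w}
    [∀ m, AddCommGroup (X m)] [∀ m, Module k (X m)] [∀ m, Module (ExteriorAlgebra k V) (X m)]
    [∀ m, IsScalarTower k (ExteriorAlgebra k V) (X m)]
    [∀ m, Module.Projective (ExteriorAlgebra k V) (X m)]
    [AddCommGroup M] [Module k M] [Module (ExteriorAlgebra k V) M]
    [IsScalarTower k (ExteriorAlgebra k V) M]
    {d : ∀ m, X (m + 1) →ₗ[ExteriorAlgebra k V] X m} {p : X 0 →ₗ[ExteriorAlgebra k V] M}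
    (hd : ∀ m, Function.Exact (d (m + 1)) (d m)) (hdp : Function.Exact (d 0) p)
    (hp : Function.Surjective p) :
    IsExactAt (homOperators b M N) Finset.univ ((-1) ^ (n + 1)) (n + 1) ↔
      ∀ f : X (n + 1) →ₗ[ExteriorAlgebra k V] N, f ∘ₗ d (n + 1) = 0 →
        ∃ g : X n →ₗ[ExteriorAlgebra k V] N, g ∘ₗ d n = f := by
  induction n generalizing X M with
  | zero =>
    rw [show (-1 : ℤˣ) ^ (0 + 1) = -1 from pow_one _]
    exact (isExactAt_homOperators_one_iff b (Submodule.subtype_injective _)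
      (exact_subtype_range hdp) hp).trans
      (forall_exists_comp_eq_iff (exact_rangeRestrict (hd 0)) (d 0).surjective_rangeRestrict _)
  | succ n ih =>
    have hses := isShortExact_homOperators b (N := N) (Submodule.subtype_injective _)
      (exact_subtype_range hdp) hp
    rw [hses.isExactAt_iff (isAnticommuting_homOperators b)
      (isExactAt_homOperators_of_projective b _), pow_succ, mul_neg_one, neg_neg]
    exact ih (X := fun m ↦ X (m + 1)) (d := fun m ↦ d (m + 1)) (fun m ↦ hd (m + 1))
      (exact_rangeRestrict (hd 0)) (d 0).surjective_rangeRestrict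

end Resolution

section Ext

universe u v w

variable (k : Type u) [Field k] {R : Type v} [Ring R] (M N : Type w) [AddCommGroup M] [Module R M]
  [AddCommGroup N] [Module R N]

variable (R) in
/-- `Ext_R^n(M, N)`, with its `k`-module structure, for modules over a `k`-algebra `R`. -/
noncomputable abbrev ModuleExt [Algebra k R] [Small.{w} R] (n : ℕ) : ModuleCat k :=
  ((_root_.Ext k (ModuleCat.{w} R) n).obj (Opposite.op (ModuleCat.of R M))).obj (ModuleCat.of R N)

variable {M}

lemma subsingleton_moduleExt_succ_iff [Algebra k R] [Small.{w} R]
    (P : ProjectiveResolution (ModuleCat.of R M)) (n : ℕ) :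
    Subsingleton (ModuleExt k R M N (n + 1)) ↔
      ∀ f : P.complex.X (n + 1) →ₗ[R] N, f ∘ₗ (P.complex.d (n + 2) (n + 1)).hom = 0 →
        ∃ g : P.complex.X n →ₗ[R] N, g ∘ₗ (P.complex.d (n + 1) n).hom = f := by
  rw [← ModuleCat.isZero_iff_subsingleton,
    (P.isoExt (R := k) (n + 1) (ModuleCat.of R N)).isZero_iff,
    ← HomologicalComplex.exactAt_iff_isZero_homology,
    HomologicalComplex.exactAt_iff' _ n (n + 1) (n + 2) (by simp) (by simp),
    ShortComplex.moduleCat_exact_iff]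
  refine ⟨fun h f hf ↦ ?_, fun h f hf ↦ ?_⟩
  · obtain ⟨g, hg⟩ := h (ModuleCat.ofHom f) (ModuleCat.hom_ext hf)
    exact ⟨ModuleCat.Hom.hom g, congrArg ModuleCat.Hom.hom hg⟩
  · obtain ⟨g, hg⟩ := h (ModuleCat.Hom.hom f) (congrArg ModuleCat.Hom.hom hf)
    exact ⟨ModuleCat.ofHom g, ModuleCat.hom_ext hg⟩

lemma exact_resolution_d (P : ProjectiveResolution (ModuleCat.of R M)) (m : ℕ) :
    Function.Exact (P.complex.d (m + 2) (m + 1)).hom (P.complex.d (m + 1) m).hom :=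
  (ShortComplex.ShortExact.moduleCat_exact_iff_function_exact _).1 (P.exact_succ m)

/-- The augmentation of a projective resolution of a module, as a morphism to the module itself
instead of to the degree `0` term of a complex concentrated in degree `0`. -/
noncomputable abbrev augmentation (P : ProjectiveResolution (ModuleCat.of R M)) :
    P.complex.X 0 ⟶ ModuleCat.of R M :=
  P.π.f 0

lemma exact_augmentation (P : ProjectiveResolution (ModuleCat.of R M)) :
    Function.Exact (P.complex.d 1 0).hom (augmentation P).hom :=
  (ShortComplex.ShortExact.moduleCat_exact_iff_function_exact _).1
    ((ShortComplex.mk (P.complex.d 1 0) (P.π.f 0)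
      P.complex_d_comp_π_f_zero).exact_of_g_is_cokernel P.isColimitCokernelCofork)

lemma surjective_augmentation (P : ProjectiveResolution (ModuleCat.of R M)) :
    Function.Surjective (augmentation P).hom :=
  (ModuleCat.epi_iff_surjective (augmentation P)).1 (inferInstanceAs (Epi (P.π.f 0)))

end Ext

section Comparison

universe u v w

variable {ι : Type*} [Fintype ι] {k : Type u} [Field k] {V : Type v} [AddCommGroup V] [Module k V]

theorem subsingleton_moduleExt_succ_iff_isExactAt [Small.{w} (ExteriorAlgebra k V)]
    (b : Module.Basis ι k V) {M N : Type w}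
    [AddCommGroup M] [Module k M] [Module (ExteriorAlgebra k V) M]
    [IsScalarTower k (ExteriorAlgebra k V) M]
    [AddCommGroup N] [Module k N] [Module (ExteriorAlgebra k V) N]
    [IsScalarTower k (ExteriorAlgebra k V) N] (n : ℕ) :
    Subsingleton (ModuleExt k (ExteriorAlgebra k V) M N (n + 1)) ↔
      IsExactAt (homOperators b M N) Finset.univ ((-1) ^ (n + 1)) (n + 1) := by
  let P := projectiveResolution (ModuleCat.of (ExteriorAlgebra k V) M)
  let _ (m : ℕ) : Module k (P.complex.X m) := ModuleCat.moduleOfAlgebraModule _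
  have _ (m : ℕ) : IsScalarTower k (ExteriorAlgebra k V) (P.complex.X m) :=
    ModuleCat.isScalarTower_of_algebra_moduleCat _
  have _ (m : ℕ) : Module.Projective (ExteriorAlgebra k V) (P.complex.X m) :=
    (IsProjective.iff_projective _).2 (P.projective m)
  rw [subsingleton_moduleExt_succ_iff k N P n]
  exact (isExactAt_homOperators_iff_of_resolution b n (X := fun m ↦ P.complex.X m) (M := M)
    (p := (augmentation P).hom) (exact_resolution_d P) (exact_augmentation P)
    (surjective_augmentation P)).symm

end Comparison

end ExteriorExt

open ExteriorExt in
theorem stmt_12_general.{u, v, w} (k : Type u) [Field k] (V : Type v) [AddCommGroup V] [Module k V]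
    [Module.Finite k V] [Small.{w} (ExteriorAlgebra k V)] (M N : Type w)
    [AddCommGroup M] [Module (ExteriorAlgebra k V) M] [Module.Finite (ExteriorAlgebra k V) M]
    [AddCommGroup N] [Module (ExteriorAlgebra k V) N] [Module.Finite (ExteriorAlgebra k V) N] :
    (∀ n : ℕ, 0 < n → Subsingleton (ModuleExt k (ExteriorAlgebra k V) M N n)) ∨
    ∃ m₀ : ℕ,
      (∀ n ≥ m₀, Even n → Nontrivial (ModuleExt k (ExteriorAlgebra k V) M N n)) ∨
      (∀ n ≥ m₀, Odd n → Nontrivial (ModuleExt k (ExteriorAlgebra k V) M N n)) := by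
  let _ : Module k M := .compHom M (algebraMap k (ExteriorAlgebra k V))
  let _ : Module k N := .compHom N (algebraMap k (ExteriorAlgebra k V))
  have : IsScalarTower k (ExteriorAlgebra k V) M := .of_compHom _ _ _
  have : IsScalarTower k (ExteriorAlgebra k V) N := .of_compHom _ _ _
  have : Module.Finite k (ExteriorAlgebra k V) := finite_exteriorAlgebra k V
  have : Module.Finite k M := .trans (ExteriorAlgebra k V) M
  have : Module.Finite k N := .trans (ExteriorAlgebra k V) N
  let b := Module.finBasis k V
  have ext_iff (n : ℕ) (hn : 0 < n) : Subsingleton (ModuleExt k (ExteriorAlgebra k V) M N n) ↔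
      IsExactAt (homOperators b M N) Finset.univ ((-1) ^ n) n := by
    obtain ⟨m, rfl⟩ := Nat.exists_eq_succ_of_ne_zero hn.ne'
    exact subsingleton_moduleExt_succ_iff_isExactAt b m
  refine (isAnticommuting_homOperators b).isExactAt_or_eventually_not.imp
    (fun h n hn ↦ (ext_iff n hn).2 (h n hn)) fun ⟨m₀, h⟩ ↦ ⟨m₀ + 1, h.imp ?_ ?_⟩ <;>
  exact fun h n hn hpar ↦ not_subsingleton_iff_nontrivial.1 fun hsub ↦
    h n (m₀.le_succ.trans hn) hpar ((ext_iff n (m₀.succ_pos.trans_le hn)).1 hsub)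

/-- Let `k` be a field, `c ≥ 1` an integer, and `A` the exterior
algebra on a `c`-dimensional `k`-vector space (equivalently
`k⟨x 1, …, x c⟩/(x i ^ 2, x i x j + x j x i)`).  Then for finitely generated left
`A`-modules `M, N`, either `Ext_A^n(M,N) = 0` for all `n > 0`, or there is a
non-negative integer `m₀` such that `Ext_A^n(M,N) ≠ 0` for all even `n ≥ m₀`, or for
all odd `n ≥ m₀`. -/
theorem stmt_12 (k : Type) [Field k] (c : ℕ) (hc : 1 ≤ c)
    (M N : Type) [AddCommGroup M] [Module (ExteriorAlgebra k (Fin c → k)) M]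
    [Module.Finite (ExteriorAlgebra k (Fin c → k)) M]
    [AddCommGroup N] [Module (ExteriorAlgebra k (Fin c → k)) N]
    [Module.Finite (ExteriorAlgebra k (Fin c → k)) N] :
    (∀ n : ℕ, 0 < n → Subsingleton
      (((_root_.Ext k (ModuleCat (ExteriorAlgebra k (Fin c → k))) n).obj
        (Opposite.op (ModuleCat.of (ExteriorAlgebra k (Fin c → k)) M))).obj
        (ModuleCat.of (ExteriorAlgebra k (Fin c → k)) N))) ∨
    ∃ m₀ : ℕ,
      (∀ n ≥ m₀, Even n → Nontrivial
        (((_root_.Ext k (ModuleCat (ExteriorAlgebra k (Fin c → k))) n).obj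
          (Opposite.op (ModuleCat.of (ExteriorAlgebra k (Fin c → k)) M))).obj
          (ModuleCat.of (ExteriorAlgebra k (Fin c → k)) N))) ∨
      (∀ n ≥ m₀, Odd n → Nontrivial
        (((_root_.Ext k (ModuleCat (ExteriorAlgebra k (Fin c → k))) n).obj
          (Opposite.op (ModuleCat.of (ExteriorAlgebra k (Fin c → k)) M))).obj
          (ModuleCat.of (ExteriorAlgebra k (Fin c → k)) N))) :=
  stmt_12_general k (Fin c → k) M N
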